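/- Consider the linear functions f, g : ℝ → ℝ given by f(t) = t and g(t) = −t. Then f and g are convex and continuous, |∇f|(t) = |∇g|(t) = 1 for every t ∈ ℝ, yet there is no constant c ∈ ℝ such that f(t) = g(t) + c for all t ∈ ℝ. (Hence boundedness from below cannot be dropped in the slope determination theorem for convex functions.) -/

import Mathlib

open Filter Topology
open scoped ENNReal Classical

/-- The metric slope of `f : M → ℝ` at `x`: it is `0` if `x` is an isolated point of `M`,
and otherwise `limsup_{y → x, y ≠ x} (f x - f y)⁺ / d(x,y)`, with values in `[0, +∞]`. -/
noncomputable def metricSlope {M : Type*} [MetricSpace M] (f : M → ℝ) (x : M) : ℝ≥0∞ :=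
  if 𝓝[≠] x = ⊥ then 0
  else Filter.limsup (fun y => ENNReal.ofReal (max (f x - f y) 0 / dist x y)) (𝓝[≠] x)

/-! A continuous linear functional `ℓ` on a normed space is `‖ℓ‖`-Lipschitz, and its difference
quotients along the rays `x - t • v`, `t > 0`, equal `ℓ v / ‖v‖`; hence its slope at every point is
`‖ℓ‖`. This does not distinguish `ℓ` from `-ℓ`, and `ℓ - (-ℓ) = 2 ℓ` is constant only if `ℓ = 0`. -/

section MetricSpace

variable {M : Type*} [MetricSpace M] {f : M → ℝ} {x : M} {K : ℝ}

theorem metricSlope_eq_limsup (f : M → ℝ) (x : M) :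
    metricSlope f x = limsup (fun y => ENNReal.ofReal ((f x - f y) / dist x y)) (𝓝[≠] x) := by
  have ofReal_posPart (y : M) : ENNReal.ofReal (max (f x - f y) 0 / dist x y) =
      ENNReal.ofReal ((f x - f y) / dist x y) := by
    rw [← max_div_div_right dist_nonneg, zero_div, ENNReal.ofReal_max, ENNReal.ofReal_zero,
      max_eq_left zero_le]
  by_cases isolated : 𝓝[≠] x = ⊥
  · simp [metricSlope, isolated]
  · simp only [metricSlope, if_neg isolated, ofReal_posPart]

theorem metricSlope_le_of_eventually (h : ∀ᶠ y in 𝓝[≠] x, f x - f y ≤ K * dist x y) :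
    metricSlope f x ≤ ENNReal.ofReal K := by
  rw [metricSlope_eq_limsup]
  refine limsup_le_of_le (h := ?_)
  filter_upwards [h, self_mem_nhdsWithin] with y hy hne
  exact ENNReal.ofReal_le_ofReal ((div_le_iff₀ (dist_pos.2 (Ne.symm hne))).2 hy)

theorem le_metricSlope_of_frequently (h : ∃ᶠ y in 𝓝[≠] x, K * dist x y ≤ f x - f y) :
    ENNReal.ofReal K ≤ metricSlope f x := by
  rw [metricSlope_eq_limsup]
  refine le_limsup_of_frequently_le ?_
  refine (h.and_eventually self_mem_nhdsWithin).mono fun y ⟨hy, hne⟩ => ?_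
  exact ENNReal.ofReal_le_ofReal ((le_div_iff₀ (dist_pos.2 (Ne.symm hne))).2 hy)

end MetricSpace

theorem tendsto_sub_smul_nhdsNE {E : Type*} [AddCommGroup E] [Module ℝ E] [TopologicalSpace E]
    [ContinuousSub E] [ContinuousSMul ℝ E] (x : E) {v : E} (hv : v ≠ 0) :
    Tendsto (fun t : ℝ => x - t • v) (𝓝[>] 0) (𝓝[≠] x) := by
  refine tendsto_nhdsWithin_iff.2 ⟨?_, ?_⟩
  · have : Continuous fun t : ℝ => x - t • v := by fun_prop
    exact (this.tendsto' 0 x (by simp)).mono_left nhdsWithin_le_nhds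
  · filter_upwards [self_mem_nhdsWithin] with t ht
    simpa [hv] using ne_of_gt ht

theorem not_exists_eq_neg_add_const {F G A : Type*} [AddGroup G] [AddGroup A]
    [IsAddTorsionFree A] [FunLike F G A] [AddMonoidHomClass F G A] {f : F}
    (hf : ∃ x, f x ≠ 0) : ¬∃ c : A, ∀ x : G, f x = -f x + c := by
  rintro ⟨c, hc⟩
  have c_eq_zero : c = 0 := by simpa using (hc 0).symm
  obtain ⟨x, hx⟩ := hf
  exact hx (self_eq_neg.1 (by simpa only [c_eq_zero, add_zero] using hc x))

section NormedSpace

variable {E : Type*} [NormedAddCommGroup E] [NormedSpace ℝ E]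

theorem ofReal_div_norm_le_metricSlope (ℓ : E →L[ℝ] ℝ) (x : E) {v : E} (hv : v ≠ 0) :
    ENNReal.ofReal (ℓ v / ‖v‖) ≤ metricSlope ℓ x := by
  refine le_metricSlope_of_frequently ((tendsto_sub_smul_nhdsNE x hv).frequently ?_)
  refine Eventually.frequently ?_
  filter_upwards [self_mem_nhdsWithin] with t (ht : 0 < t)
  have norm_ne_zero : ‖v‖ ≠ 0 := norm_ne_zero_iff.2 hv
  apply le_of_eq
  calc ℓ v / ‖v‖ * dist x (x - t • v) = ℓ v / ‖v‖ * (t * ‖v‖) := by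
        rw [dist_self_sub_right, norm_smul, Real.norm_of_nonneg ht.le]
    _ = t * ℓ v := by field_simp
    _ = ℓ x - ℓ (x - t • v) := by simp

theorem ofReal_apply_le_metricSlope_mul_enorm (ℓ : E →L[ℝ] ℝ) (x v : E) :
    ENNReal.ofReal (ℓ v) ≤ metricSlope ℓ x * ‖v‖ₑ := by
  rcases eq_or_ne v 0 with rfl | hv
  · simp
  · calc ENNReal.ofReal (ℓ v) = ENNReal.ofReal (ℓ v / ‖v‖) * ‖v‖ₑ := by
          rw [← ofReal_norm, ← ENNReal.ofReal_mul' (norm_nonneg v),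
            div_mul_cancel₀ _ (norm_ne_zero_iff.2 hv)]
      _ ≤ metricSlope ℓ x * ‖v‖ₑ := by
          gcongr
          exact ofReal_div_norm_le_metricSlope ℓ x hv

theorem metricSlope_continuousLinearMap (ℓ : E →L[ℝ] ℝ) (x : E) : metricSlope ℓ x = ‖ℓ‖ₑ := by
  apply le_antisymm
  · rw [← ofReal_norm]
    refine metricSlope_le_of_eventually (.of_forall fun y => ?_)
    rw [← map_sub, dist_eq_norm]
    exact (Real.le_norm_self _).trans (ℓ.le_opNorm _)
  · refine ℓ.opENorm_le_bound fun v => ?_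
    rw [← ofReal_norm, Real.norm_eq_abs]
    rcases abs_choice (ℓ v) with h | h <;> rw [h]
    · exact ofReal_apply_le_metricSlope_mul_enorm ℓ x v
    · simpa using ofReal_apply_le_metricSlope_mul_enorm ℓ x (-v)

theorem linear_counterexample_general {ℓ : E →L[ℝ] ℝ} (hℓ : ℓ ≠ 0) :
    ConvexOn ℝ Set.univ (fun x => ℓ x) ∧ ConvexOn ℝ Set.univ (fun x => -ℓ x) ∧
    Continuous (fun x => ℓ x) ∧ Continuous (fun x => -ℓ x) ∧
    (∀ x : E, metricSlope (fun y => ℓ y) x = ‖ℓ‖ₑ ∧ metricSlope (fun y => -ℓ y) x = ‖ℓ‖ₑ) ∧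
    ¬∃ c : ℝ, ∀ x : E, ℓ x = -ℓ x + c := by
  refine ⟨ℓ.toLinearMap.convexOn convex_univ, (-ℓ).toLinearMap.convexOn convex_univ,
    ℓ.continuous, (-ℓ).continuous, fun x => ⟨metricSlope_continuousLinearMap ℓ x, ?_⟩,
    not_exists_eq_neg_add_const (DFunLike.ne_iff.1 hℓ)⟩
  exact (metricSlope_continuousLinearMap (-ℓ) x).trans (enorm_neg ℓ)

end NormedSpace

/-- The linear functions `f(t) = t` and `g(t) = -t` are convex and continuous with slope
identically `1`, yet they do not differ by a constant (boundedness from below is needed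
in the convex determination theorem). -/
theorem linear_counterexample :
    ConvexOn ℝ Set.univ (fun t : ℝ => t) ∧ ConvexOn ℝ Set.univ (fun t : ℝ => -t) ∧
    Continuous (fun t : ℝ => t) ∧ Continuous (fun t : ℝ => -t) ∧
    (∀ t : ℝ, metricSlope (fun s : ℝ => s) t = 1 ∧ metricSlope (fun s : ℝ => -s) t = 1) ∧
    ¬∃ c : ℝ, ∀ t : ℝ, t = -t + c := by
  simpa using linear_counterexample_general (one_ne_zero : (1 : ℝ →L[ℝ] ℝ) ≠ 0)
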